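/- For every clustering 𝒞 of V with disagreement vector y and every p ∈ [1,∞), Σ_{u∈V} ( Σ_{v ∈ N_u^+ ∩ C(u)} d_uv )^p ≤ 2^{p+1} · Σ_{u∈V} y(u)^p. -/

import Mathlib

/-!
Let `v` be a positive neighbor of `u` in the cluster of `u`. Every vertex of the symmetric
difference of `N_u⁺` and `N_v⁺` has edges of opposite signs to `u` and `v`, so exactly one of these
two edges is a disagreement. Hence `d_uv ≤ w_uv (y(u) + y(v))` with `w_uv = |N_u⁺ ∪ N_v⁺|⁻¹`
(`corrDist_le_disag`).

For fixed `u` the weights `w_uv` have total mass at most one (`sum_inv_card_union_le`), so Jensen's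
inequality (`rpow_sum_mul_le`) bounds the `p`-th power of the cost at `u` by
`∑_v w_uv (y(u) + y(v))^p ≤ 2^p ∑_v w_uv (y(u)^p + y(v)^p)`. The weights and the summation range are
symmetric in `u` and `v`, so after summation over `u` both parts are equal, and each is at most
`∑_u y(u)^p`.
-/

open Finset

noncomputable section

variable {V : Type*} [Fintype V] [DecidableEq V]

/-- Positive neighborhood of `u` (including the positive self-loop at `u`). -/
def Nplus (E : V → V → Prop) [DecidableRel E] (u : V) : Finset V :=
  insert u (Finset.univ.filter fun v => v ≠ u ∧ E u v)

/-- Negative neighborhood of `u`. -/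
def Nminus (E : V → V → Prop) [DecidableRel E] (u : V) : Finset V :=
  Finset.univ.filter fun v => v ≠ u ∧ ¬ E u v

/-- The correlation metric `d`. -/
def corrDist (E : V → V → Prop) [DecidableRel E] (u v : V) : ℝ :=
  if u = v then 0
  else 1 - ((Nplus E u ∩ Nplus E v).card : ℝ) / ((Nplus E u ∪ Nplus E v).card : ℝ)

/-- The set `R₁` of vertices `u` with `|N_u^- ∩ {v : d_uv ≤ 0.7}| ≥ (10/3)·Δ_u`. -/
def R1set (E : V → V → Prop) [DecidableRel E] : Finset V :=
  Finset.univ.filter fun u =>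
    (10 / 3 : ℝ) * (Nplus E u).card ≤ ((Nminus E u).filter fun v => corrDist E u v ≤ 0.7).card

/-- The adjusted correlation metric `f`: start from `d`, round negative edges with
`d > 0.7` up to `1`, and set `f_uv = 1` for all `v ≠ u` whenever `u ∈ R₁`. -/
def adjDist (E : V → V → Prop) [DecidableRel E] (u v : V) : ℝ :=
  if u = v then 0
  else if u ∈ R1set E ∨ v ∈ R1set E then 1
  else if ¬ E u v ∧ 0.7 < corrDist E u v then 1
  else corrDist E u v

/-- A clustering is encoded by a map `c : V → V`; the cluster `C(u)` is the fiber of `c` at `u`. -/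
def clusterOf (c : V → V) (u : V) : Finset V :=
  Finset.univ.filter fun w => c w = c u

/-- The number of disagreements incident to `u` with respect to the clustering `c`. -/
def disag (E : V → V → Prop) [DecidableRel E] (c : V → V) (u : V) : ℕ :=
  (Finset.univ.filter fun v =>
    v ≠ u ∧ ((E u v ∧ c u ≠ c v) ∨ (¬ E u v ∧ c u = c v))).card

/-- `OPT(1)`: the minimum total number of disagreements over all clusterings. -/
def OPT1 (E : V → V → Prop) [DecidableRel E] : ℕ :=
  Finset.univ.inf' ⟨id, Finset.mem_univ id⟩ fun c : V → V => ∑ u, disag E c u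

/-- `OPT(p)`: the minimum `ℓ_p`-norm of the disagreement vector over all clusterings. -/
def OPTlp (E : V → V → Prop) [DecidableRel E] (p : ℝ) : ℝ :=
  Finset.univ.inf' ⟨id, Finset.mem_univ id⟩ fun c : V → V =>
    (∑ u, (disag E c u : ℝ) ^ p) ^ (1 / p)

/-- `OPT(∞)`: the minimum `ℓ_∞`-norm of the disagreement vector over all clusterings. -/
def OPTinf (E : V → V → Prop) [DecidableRel E] : ℕ :=
  Finset.univ.inf' ⟨id, Finset.mem_univ id⟩ fun c : V → V => Finset.univ.sup (disag E c)

/-- The set of bad triangles: triples of distinct vertices spanning exactly two positive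
edges and one negative edge. -/
def badTriangles (E : V → V → Prop) [DecidableRel E] : Finset (Finset V) :=
  Finset.univ.filter fun T =>
    ∃ u v w : V, u ≠ v ∧ u ≠ w ∧ v ≠ w ∧ T = {u, v, w} ∧ E u v ∧ E u w ∧ ¬ E v w

lemma mem_Nplus (E : V → V → Prop) [DecidableRel E] {u v : V} :
    v ∈ Nplus E u ↔ v = u ∨ E u v := by
  simp only [Nplus, Finset.mem_insert, Finset.mem_filter, Finset.mem_univ, true_and]
  tauto

lemma card_union_pos (E : V → V → Prop) [DecidableRel E] (u v : V) :
    0 < (Nplus E u ∪ Nplus E v).card :=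
  Finset.card_pos.2 ⟨u, Finset.mem_union_left _ ((mem_Nplus E).2 (Or.inl rfl))⟩

lemma corrDist_nonneg (E : V → V → Prop) [DecidableRel E] (u v : V) :
    0 ≤ corrDist E u v := by
  unfold corrDist
  split_ifs
  · exact le_rfl
  · refine sub_nonneg.2 (div_le_one_of_le₀ ?_ (by positivity))
    exact_mod_cast Finset.card_le_card Finset.inter_subset_union

lemma mem_inter_cluster_comm (E : V → V → Prop) [DecidableRel E]
    (hsymm : ∀ u v, E u v ↔ E v u) (c : V → V) {u v : V} :
    v ∈ Nplus E u ∩ clusterOf c u ↔ u ∈ Nplus E v ∩ clusterOf c v := by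
  simp only [Finset.mem_inter, mem_Nplus, clusterOf, Finset.mem_filter, Finset.mem_univ,
    true_and, hsymm u v, eq_comm (a := v), eq_comm (a := c v)]

/-- If `u` and `v` are in the same cluster and joined by a positive edge, a vertex that is a
positive neighbor of exactly one of them witnesses a disagreement at `u` or at `v`. -/
lemma card_union_le (E : V → V → Prop) [DecidableRel E]
    (hsymm : ∀ u v, E u v ↔ E v u) (c : V → V) {u v : V}
    (hv : v ∈ Nplus E u ∩ clusterOf c u) :
    (Nplus E u ∪ Nplus E v).card ≤
      (Nplus E u ∩ Nplus E v).card + (disag E c u + disag E c v) := by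
  have hu := (mem_inter_cluster_comm E hsymm c).1 hv
  simp only [Finset.mem_inter, mem_Nplus, clusterOf, Finset.mem_filter, Finset.mem_univ,
    true_and] at hu hv
  rw [← Nat.sub_le_iff_le_add',
    ← Finset.card_sdiff_of_subset (Finset.inter_subset_union (s := Nplus E u) (t := Nplus E v))]
  refine (Finset.card_le_card ?_).trans (Finset.card_union_le _ _)
  intro w hw
  simp only [Finset.mem_sdiff, Finset.mem_union, Finset.mem_inter, mem_Nplus,
    Finset.mem_filter, Finset.mem_univ, true_and] at hw ⊢
  grind

lemma corrDist_le_disag (E : V → V → Prop) [DecidableRel E]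
    (hsymm : ∀ u v, E u v ↔ E v u) (c : V → V) {u v : V}
    (hv : v ∈ Nplus E u ∩ clusterOf c u) :
    corrDist E u v ≤ ((Nplus E u ∪ Nplus E v).card : ℝ)⁻¹ *
      ((disag E c u : ℝ) + disag E c v) := by
  have hpos : (0 : ℝ) < (Nplus E u ∪ Nplus E v).card := by exact_mod_cast card_union_pos E u v
  have hcard : ((Nplus E u ∪ Nplus E v).card : ℝ) ≤
      (Nplus E u ∩ Nplus E v).card + ((disag E c u : ℝ) + disag E c v) := by
    exact_mod_cast card_union_le E hsymm c hv
  unfold corrDist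
  split_ifs
  · positivity
  · rw [inv_mul_eq_div, sub_le_iff_le_add, ← add_div, one_le_div hpos]
    linarith

/-- The weights `|N_u⁺ ∪ N_v⁺|⁻¹` have total mass at most one, since each is at most `|N_u⁺|⁻¹`
and there are at most `|N_u⁺|` of them. -/
lemma sum_inv_card_union_le (E : V → V → Prop) [DecidableRel E] (c : V → V) (u : V) :
    ∑ v ∈ Nplus E u ∩ clusterOf c u, ((Nplus E u ∪ Nplus E v).card : ℝ)⁻¹ ≤ 1 := by
  have hpos : (0 : ℝ) < (Nplus E u).card := by
    have := card_union_pos E u u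
    rw [Finset.union_self] at this
    exact_mod_cast this
  calc ∑ v ∈ Nplus E u ∩ clusterOf c u, ((Nplus E u ∪ Nplus E v).card : ℝ)⁻¹
      ≤ ∑ v ∈ Nplus E u ∩ clusterOf c u, ((Nplus E u).card : ℝ)⁻¹ := by
        refine Finset.sum_le_sum fun v _ => inv_anti₀ hpos ?_
        exact_mod_cast Finset.card_le_card Finset.subset_union_left
    _ = (Nplus E u ∩ clusterOf c u).card / ((Nplus E u).card : ℝ) := by
        rw [Finset.sum_const, nsmul_eq_mul, div_eq_mul_inv]
    _ ≤ 1 := by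
        refine div_le_one_of_le₀ ?_ hpos.le
        exact_mod_cast Finset.card_le_card Finset.inter_subset_left

/-- Jensen's inequality for `t ↦ t ^ p` with nonnegative weights of total mass at most one. -/
lemma rpow_sum_mul_le {ι : Type*} (s : Finset ι) (w f : ι → ℝ) {p : ℝ} (hp : 1 ≤ p)
    (hw : ∀ i, 0 ≤ w i) (hf : ∀ i, 0 ≤ f i) (h1 : ∑ i ∈ s, w i ≤ 1) :
    (∑ i ∈ s, w i * f i) ^ p ≤ ∑ i ∈ s, w i * f i ^ p := by
  have h0 : 0 ≤ ∑ i ∈ s, w i * f i ^ p :=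
    Finset.sum_nonneg fun i _ => mul_nonneg (hw i) (Real.rpow_nonneg (hf i) p)
  have hle : ∑ i ∈ s, w i * f i ≤ (∑ i ∈ s, w i * f i ^ p) ^ p⁻¹ :=
    (Real.inner_le_weight_mul_Lp_of_nonneg s hp w f hw hf).trans
      (mul_le_of_le_one_left (Real.rpow_nonneg h0 _)
        (Real.rpow_le_one (Finset.sum_nonneg fun i _ => hw i) h1
          (sub_nonneg.2 (inv_le_one_of_one_le₀ hp))))
  calc (∑ i ∈ s, w i * f i) ^ p ≤ ((∑ i ∈ s, w i * f i ^ p) ^ p⁻¹) ^ p :=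
        Real.rpow_le_rpow (Finset.sum_nonneg fun i _ => mul_nonneg (hw i) (hf i)) hle
          (by linarith)
    _ = _ := Real.rpow_inv_rpow h0 (by linarith)

lemma add_rpow_le_two_rpow_mul {a b p : ℝ} (ha : 0 ≤ a) (hb : 0 ≤ b) (hp : 0 ≤ p) :
    (a + b) ^ p ≤ (2 : ℝ) ^ p * (a ^ p + b ^ p) := by
  have hA := Real.rpow_nonneg ha p
  have hB := Real.rpow_nonneg hb p
  calc (a + b) ^ p ≤ (2 * max a b) ^ p :=
        Real.rpow_le_rpow (by positivity)
          (by linarith [le_max_left a b, le_max_right a b]) hp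
    _ = (2 : ℝ) ^ p * max a b ^ p := Real.mul_rpow (by norm_num) (le_max_of_le_left ha)
    _ ≤ (2 : ℝ) ^ p * (a ^ p + b ^ p) := by
        refine mul_le_mul_of_nonneg_left ?_ (by positivity)
        rcases max_choice a b with h | h <;> rw [h] <;> linarith

/-- for every clustering and every `p ∈ [1,∞)`,
`Σ_u (Σ_{v ∈ N_u^+ ∩ C(u)} d_uv)^p ≤ 2^{p+1} · Σ_u y(u)^p`. -/
theorem lp_same_cluster_pos_cost (E : V → V → Prop) [DecidableRel E]
    (hsymm : ∀ u v, E u v ↔ E v u) (c : V → V) (p : ℝ) (hp : 1 ≤ p) :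
    ∑ u, (∑ v ∈ Nplus E u ∩ clusterOf c u, corrDist E u v) ^ p ≤
      (2 : ℝ) ^ (p + 1) * ∑ u, (disag E c u : ℝ) ^ p := by
  have hsub : ∀ x ∈ Finset.univ, (∑ v ∈ Nplus E x ∩ clusterOf c x, corrDist E x v) ^ p ≤
      ∑ v ∈ Nplus E x ∩ clusterOf c x, ((Nplus E x ∪ Nplus E v).card : ℝ)⁻¹ *
        ((2 : ℝ) ^ p * ((disag E c x : ℝ) ^ p + (disag E c v : ℝ) ^ p)) := by
    intro u _
    calc (∑ v ∈ Nplus E u ∩ clusterOf c u, corrDist E u v) ^ p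
        ≤ (∑ v ∈ Nplus E u ∩ clusterOf c u, ((Nplus E u ∪ Nplus E v).card : ℝ)⁻¹ *
            ((disag E c u : ℝ) + disag E c v)) ^ p :=
          Real.rpow_le_rpow (Finset.sum_nonneg fun v _ => corrDist_nonneg E u v)
            (Finset.sum_le_sum fun v hv => corrDist_le_disag E hsymm c hv) (by linarith)
      _ ≤ ∑ v ∈ Nplus E u ∩ clusterOf c u, ((Nplus E u ∪ Nplus E v).card : ℝ)⁻¹ *
            ((disag E c u : ℝ) + disag E c v) ^ p :=
          rpow_sum_mul_le _ _ _ hp (fun _ => by positivity) (fun _ => by positivity)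
            (sum_inv_card_union_le E c u)
      _ ≤ _ := Finset.sum_le_sum fun v _ => mul_le_mul_of_nonneg_left
            (add_rpow_le_two_rpow_mul (by positivity) (by positivity) (by linarith))
            (by positivity)
  refine (Finset.sum_le_sum hsub).trans ?_
  -- Split the bound into its `u`-part and its `v`-part; exchanging `u` and `v` identifies them.
  have hA : ∑ u, ∑ v ∈ Nplus E u ∩ clusterOf c u,
      ((Nplus E u ∪ Nplus E v).card : ℝ)⁻¹ * (disag E c u : ℝ) ^ p ≤
        ∑ u, (disag E c u : ℝ) ^ p := by
    refine Finset.sum_le_sum fun u _ => ?_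
    rw [← Finset.sum_mul]
    exact mul_le_of_le_one_left (by positivity) (sum_inv_card_union_le E c u)
  have hB : ∑ u, ∑ v ∈ Nplus E u ∩ clusterOf c u,
      ((Nplus E u ∪ Nplus E v).card : ℝ)⁻¹ * (disag E c v : ℝ) ^ p =
        ∑ u, ∑ v ∈ Nplus E u ∩ clusterOf c u,
          ((Nplus E u ∪ Nplus E v).card : ℝ)⁻¹ * (disag E c u : ℝ) ^ p := by
    rw [Finset.sum_comm' (t' := Finset.univ) (s' := fun v => Nplus E v ∩ clusterOf c v)]
    · simp only [Finset.union_comm]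
    · intro u v
      simp only [Finset.mem_univ, true_and, and_true]
      exact mem_inter_cluster_comm E hsymm c
  have hsplit : ∑ u, ∑ v ∈ Nplus E u ∩ clusterOf c u, ((Nplus E u ∪ Nplus E v).card : ℝ)⁻¹ *
        ((2 : ℝ) ^ p * ((disag E c u : ℝ) ^ p + (disag E c v : ℝ) ^ p)) =
      (2 : ℝ) ^ p * (∑ u, ∑ v ∈ Nplus E u ∩ clusterOf c u,
          ((Nplus E u ∪ Nplus E v).card : ℝ)⁻¹ * (disag E c u : ℝ) ^ p +
        ∑ u, ∑ v ∈ Nplus E u ∩ clusterOf c u,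
          ((Nplus E u ∪ Nplus E v).card : ℝ)⁻¹ * (disag E c v : ℝ) ^ p) := by
    simp only [← Finset.sum_add_distrib, Finset.mul_sum]
    refine Finset.sum_congr rfl fun u _ => Finset.sum_congr rfl fun v _ => by ring
  rw [hsplit, hB, Real.rpow_add_one (by norm_num), mul_assoc]
  exact mul_le_mul_of_nonneg_left (by linarith) (by positivity)
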